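/- Every solvable subgroup of GL(n,ℤ) is polycyclic. -/

import Mathlib

/-! The heart of the argument is that a solvable group with a strongly irreducible representation
over an algebraically closed field acts by scalars. Going up the derived series, let `N` be normal
with scalar commutators. Then every `σ g` with `g ∈ N` is a weight vector for the conjugation action
of `N` on endomorphisms. There are only finitely many weights, and two elements of the same weight
differ by a central element of `N`, which is a scalar by Clifford theory. So `σ g` has finitely many
conjugates up to scalars, its eigenspaces have finite orbits, and strong irreducibility makes `σ g`
a scalar. By induction on the dimension, every solvable linear group has a common eigenvector for a
subgroup of finite index.

Apply this to the functionals on a lattice `L`. An eigenfunctional `φ` of a finite-index subgroup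
has eigenvalues which multiply the lattice `φ(L)` into itself, so they are units in a number field
and generate a finitely generated group by Dirichlet. The action on `ker φ` is handled by induction
on the rank, and what remains fixes `φ` and `ker φ`, hence embeds in the additive group `End L` by
`g ↦ g - 1`. Thus every solvable subgroup of `Aut L` is finitely generated, and generators of the
terms of the derived series refine it to a series with cyclic factors. -/

section Weights

/-- The weight space of a representation for a character: the vectors that every element of the
monoid scales by the value of the character. -/
def weightSpace {A R M : Type*} [Monoid A] [CommRing R] [AddCommGroup M] [Module R M]
    (σ : Representation R A M) (χ : A →* R) : Submodule R M :=
  ⨅ a, Module.End.eigenspace (σ a) (χ a)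

theorem mem_weightSpace {A R M : Type*} [Monoid A] [CommRing R] [AddCommGroup M] [Module R M]
    {σ : Representation R A M} {χ : A →* R} {v : M} :
    v ∈ weightSpace σ χ ↔ ∀ a, σ a v = χ a • v := by
  simp only [weightSpace, Submodule.mem_iInf, Module.End.mem_eigenspace_iff]

variable {A K V : Type*} [Monoid A] [Field K] [AddCommGroup V] [Module K V]

theorem exists_mem_weightSpace {σ : Representation K A V} {v : V} (hv : v ≠ 0)
    (h : ∀ a, ∃ c : K, σ a v = c • v) : ∃ χ, v ∈ weightSpace σ χ := by
  choose c hc using h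
  refine ⟨⟨⟨c, ?_⟩, fun a b => ?_⟩, mem_weightSpace.2 hc⟩ <;> apply smul_left_injective K hv
  · simp [← hc]
  · simp only [← hc, map_mul, Module.End.mul_apply, mul_smul]
    rw [hc b, map_smul, hc a, smul_comm]

theorem linearIndependent_of_mem_weightSpace {ι : Type*} {σ : Representation K A V}
    {χ : ι → A →* K} (hχ : Function.Injective χ) {v : ι → V} (hv : ∀ i, v i ≠ 0)
    (h : ∀ i, v i ∈ weightSpace σ (χ i)) : LinearIndependent K v := by
  rw [linearIndependent_iff']
  intro s c hc j hj
  obtain ⟨f, hf⟩ : ∃ f : Module.Dual K V, f (v j) ≠ 0 := by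
    by_contra! hf
    exact hv j ((Module.forall_dual_apply_eq_zero_iff K _).1 hf)
  have hsum : ∑ i ∈ s, (c i * f (v i)) • (χ i : A → K) = 0 := by
    ext a
    have := congrArg (fun w => f (σ a w)) hc
    simp only [map_sum, map_smul, mem_weightSpace.1 (h _), map_zero, smul_eq_mul] at this
    simpa [mul_assoc, mul_comm, mul_left_comm] using this
  have := linearIndependent_iff'.1 ((linearIndependent_monoidHom A K).comp χ hχ) s _ hsum j hj
  exact (mul_eq_zero.1 this).resolve_right hf

theorem finite_setOf_weightSpace_ne_bot [FiniteDimensional K V] (σ : Representation K A V) :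
    {χ | weightSpace σ χ ≠ ⊥}.Finite := by
  choose v hv hv0 using fun χ : {χ | weightSpace σ χ ≠ ⊥} =>
    (weightSpace σ χ).exists_mem_ne_zero_of_ne_bot χ.2
  exact (linearIndependent_of_mem_weightSpace Subtype.val_injective hv0 hv).finite_of_isNoetherian

theorem exists_weightSpace_ne_bot_of_commute [IsAlgClosed K] [FiniteDimensional K V] [Nontrivial V]
    {σ : Representation K A V} (hσ : ∀ a b, Commute (σ a) (σ b)) : ∃ χ, weightSpace σ χ ≠ ⊥ := by
  let R := Algebra.adjoin K (Set.range σ)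
  have : IsMulCommutative R := Algebra.isMulCommutative_adjoin K <| by
    rintro _ ⟨a, rfl⟩ _ ⟨b, rfl⟩
    exact hσ a b
  have : IsArtinian R V := isArtinian_of_tower K inferInstance
  obtain ⟨S, hS⟩ := IsAtomic.exists_atom (Submodule R V)
  have : IsSimpleModule R S := isSimpleModule_iff_isAtom.2 hS
  have hfin : Module.Finite K S := Module.Finite.of_injective (S.subtype.restrictScalars K)
    Subtype.val_injective
  have hrank : Module.finrank K (S.restrictScalars K) = 1 :=
    IsSimpleModule.finrank_eq_one_of_isMulCommutative R S K
  obtain ⟨v, hv, hspan⟩ := finrank_eq_one_iff'.1 hrank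
  have hv' : (v : V) ≠ 0 := by simpa using hv
  obtain ⟨χ, hχ⟩ := exists_mem_weightSpace (σ := σ) hv' fun a => by
    obtain ⟨c, hc⟩ := hspan ((⟨σ a, Algebra.subset_adjoin ⟨a, rfl⟩⟩ : R) • v)
    exact ⟨c, (congrArg Subtype.val hc).symm⟩
  exact ⟨χ, (Submodule.ne_bot_iff _).2 ⟨v, hχ, hv'⟩⟩

end Weights

section Conjugation

variable {G R M : Type*} [Group G] [CommRing R] [AddCommGroup M] [Module R M]

theorem map_eigenspace_conj (σ : Representation R G M) (x : G) (T : Module.End R M) (μ : R) :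
    (T.eigenspace μ).map (σ x) = Module.End.eigenspace (σ.linHom σ x T) μ := by
  have hcancel : ∀ v, σ x (σ x⁻¹ v) = v := σ.self_inv_apply x
  ext v
  simp only [Submodule.mem_map, Module.End.mem_eigenspace_iff, Representation.linHom_apply,
    LinearMap.comp_apply]
  constructor
  · rintro ⟨w, hw, rfl⟩
    rw [σ.inv_self_apply, hw, map_smul]
  · intro hv
    exact ⟨σ x⁻¹ v, by simpa using congrArg (σ x⁻¹) hv, hcancel v⟩

theorem linHom_apply_self (σ : Representation R G M) (x g : G) :
    σ.linHom σ x (σ g) = σ (x * g * x⁻¹) := by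
  simp only [Representation.linHom_apply, map_mul, Module.End.mul_eq_comp, LinearMap.comp_assoc]

theorem map_weightSpace_conj (σ : Representation R G M) (N : Subgroup G) [N.Normal]
    (χ : N →* R) (x : G) :
    (weightSpace (σ.comp N.subtype) χ).map (σ x) =
      weightSpace (σ.comp N.subtype) (χ.comp (MulAut.conjNormal x⁻¹).toMonoidHom) := by
  have hconj (a : N) : σ.linHom σ x (σ a) = σ (MulAut.conjNormal x a : N) := by
    rw [linHom_apply_self, MulAut.conjNormal_apply]
  rw [weightSpace, Submodule.map_iInf _ (σ.apply_bijective x).1]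
  refine (MulAut.conjNormal (H := N) x).iInf_congr fun a => ?_
  simp [map_eigenspace_conj, hconj]

theorem commute_apply_mul_inv_of_mem_weightSpace {σ : Representation R G M} {N : Subgroup G}
    {χ : N →* R} {g h : G} (hgχ : σ g ∈ weightSpace ((σ.linHom σ).comp N.subtype) χ)
    (hhχ : σ h ∈ weightSpace ((σ.linHom σ).comp N.subtype) χ) (a : N) :
    Commute (σ a) (σ (g * h⁻¹)) := by
  have hga : σ (a * g * (a : G)⁻¹) = χ a • σ g :=
    (linHom_apply_self σ a g).symm.trans (mem_weightSpace.1 hgχ a)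
  have hha : σ (a * h * (a : G)⁻¹) = χ a • σ h :=
    (linHom_apply_self σ a h).symm.trans (mem_weightSpace.1 hhχ a)
  have hconj : σ (a * (g * h⁻¹) * (a : G)⁻¹) = σ (g * h⁻¹) := by
    refine ((Group.isUnit (a * h * (a : G)⁻¹)).map σ).mul_left_injective ?_
    calc σ (a * (g * h⁻¹) * (a : G)⁻¹) * σ (a * h * (a : G)⁻¹) = σ (a * g * (a : G)⁻¹) := by
          rw [← map_mul]; group
      _ = σ (g * h⁻¹) * (χ a • σ h) := by rw [hga, mul_smul_comm, ← map_mul]; group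
      _ = σ (g * h⁻¹) * σ (a * h * (a : G)⁻¹) := by rw [hha]
  calc σ a * σ (g * h⁻¹) = σ (a * (g * h⁻¹) * (a : G)⁻¹) * σ a := by simp only [← map_mul]; group
    _ = σ (g * h⁻¹) * σ a := by rw [hconj]

end Conjugation

section Scalars

variable {G K V : Type*} [Group G] [Field K] [AddCommGroup V] [Module K V]

/-- The subgroup of the elements that act by scalars. -/
def scalarSubgroup (σ : Representation K G V) : Subgroup G :=
  (Units.map (algebraMap K (Module.End K V) : K →* Module.End K V)).range.comap σ.toHomUnits

theorem mem_scalarSubgroup {σ : Representation K G V} {g : G} :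
    g ∈ scalarSubgroup σ ↔ ∃ c : Kˣ, σ g = c • 1 := by
  simp [scalarSubgroup, Units.ext_iff, Algebra.algebraMap_eq_smul_one, Units.smul_def, eq_comm]

theorem mem_scalarSubgroup_of_eq_smul [Nontrivial V] {σ : Representation K G V} {g : G} {c : K}
    (h : σ g = c • 1) : g ∈ scalarSubgroup σ := by
  obtain ⟨v, hv⟩ := exists_ne (0 : V)
  have hc : c ≠ 0 := by
    rintro rfl
    exact hv ((σ.apply_bijective g).1 (by simp [h]))
  exact mem_scalarSubgroup.2 ⟨Units.mk0 c hc, h⟩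

theorem exists_mem_weightSpace_linHom [Nontrivial V] {σ : Representation K G V} {N : Subgroup G}
    (h : ⁅N, N⁆ ≤ scalarSubgroup σ) (g : N) :
    ∃ χ, σ g ∈ weightSpace ((σ.linHom σ).comp N.subtype) χ := by
  refine exists_mem_weightSpace ((Group.isUnit (g : G)).map σ).ne_zero fun a => ?_
  obtain ⟨c, hc⟩ := mem_scalarSubgroup.1 (h (Subgroup.commutator_mem_commutator a.2 g.2))
  refine ⟨c, ?_⟩
  calc σ.linHom σ a (σ g) = σ (a * g * (a : G)⁻¹ * (g : G)⁻¹) * σ g := by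
        rw [linHom_apply_self, ← map_mul, inv_mul_cancel_right]
    _ = (c : K) • σ g := by
        rw [← commutatorElement_def, hc, smul_one_mul, Units.smul_def]

end Scalars

/-- Strong irreducibility of a representation: no subgroup of finite index leaves a proper nonzero
subspace invariant. The zero space is not excluded. -/
def IsStronglyIrreducible {G K V : Type*} [Group G] [Field K] [AddCommGroup V] [Module K V]
    (σ : Representation K G V) : Prop :=
  ∀ (H : Subgroup G) [H.FiniteIndex] (U : Submodule K V), U ≠ ⊥ →
    (∀ h ∈ H, U ≤ U.comap (σ h)) → U = ⊤

namespace IsStronglyIrreducible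

variable {G K V : Type*} [Group G] [Field K] [AddCommGroup V] [Module K V]
  {σ : Representation K G V}

theorem eq_top_of_finite_orbit (hσ : IsStronglyIrreducible σ) {U : Submodule K V} (hU : U ≠ ⊥)
    (hfin : (Set.range fun g => U.map (σ g)).Finite) : U = ⊤ := by
  let _ : MulAction G (Submodule K V) :=
    { smul g W := W.map (σ g)
      one_smul W := by
        change W.map (σ 1) = W
        simp [Module.End.one_eq_id]
      mul_smul g h W := by
        change W.map (σ (g * h)) = (W.map (σ h)).map (σ g)
        rw [map_mul, Module.End.mul_eq_comp, Submodule.map_comp] }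
  have : (MulAction.stabilizer G U).FiniteIndex := ⟨by
    rw [MulAction.index_stabilizer]
    exact (Set.ncard_pos hfin).2 (MulAction.nonempty_orbit U) |>.ne'⟩
  exact hσ (MulAction.stabilizer G U) U hU fun g hg => Submodule.map_le_iff_le_comap.1 hg.le

variable [FiniteDimensional K V] [Nontrivial V] {N : Subgroup G} [N.Normal]

theorem le_scalarSubgroup_of_weightSpace_ne_bot (hσ : IsStronglyIrreducible σ) {χ : N →* K}
    (hχ : weightSpace (σ.comp N.subtype) χ ≠ ⊥) : N ≤ scalarSubgroup σ := by
  have htop : weightSpace (σ.comp N.subtype) χ = ⊤ := by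
    refine hσ.eq_top_of_finite_orbit hχ <|
      ((finite_setOf_weightSpace_ne_bot (σ.comp N.subtype)).image
        (weightSpace (σ.comp N.subtype))).subset ?_
    rintro _ ⟨x, rfl⟩
    refine ⟨_, ?_, (map_weightSpace_conj σ N χ x).symm⟩
    rw [Set.mem_ofPred, ← map_weightSpace_conj]
    exact Submodule.map_bot (σ x) ▸
      (Submodule.map_injective_of_injective (σ.apply_bijective x).1).ne hχ
  intro g hg
  refine mem_scalarSubgroup_of_eq_smul (c := χ ⟨g, hg⟩) (LinearMap.ext fun v => ?_)
  exact mem_weightSpace.1 (htop ▸ Submodule.mem_top : v ∈ weightSpace _ χ) ⟨g, hg⟩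

variable [IsAlgClosed K]

theorem exists_eq_smul_one_of_finite_conj (hσ : IsStronglyIrreducible σ) (T : Module.End K V)
    {S : Set (Module.End K V)} (hS : S.Finite)
    (h : ∀ x, ∃ T' ∈ S, ∃ c : Kˣ, σ.linHom σ x T = c • T') : ∃ μ : K, T = μ • 1 := by
  obtain ⟨μ, hμ⟩ := Module.End.exists_eigenvalue T
  refine ⟨μ, ?_⟩
  suffices T.eigenspace μ = ⊤ by
    ext v
    simpa using Module.End.mem_eigenspace_iff.1 (this ▸ Submodule.mem_top : v ∈ T.eigenspace μ)
  refine hσ.eq_top_of_finite_orbit hμ <| (hS.biUnion fun T' _ =>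
    T'.finite_hasEigenvalue.image T'.eigenspace).subset ?_
  rintro _ ⟨x, rfl⟩
  obtain ⟨T', hT', c, hc⟩ := h x
  have heq : (T.eigenspace μ).map (σ x) = T'.eigenspace (c⁻¹ • μ) := by
    ext v
    rw [map_eigenspace_conj, hc, Module.End.mem_eigenspace_iff, Module.End.mem_eigenspace_iff,
      smul_assoc, eq_inv_smul_iff, LinearMap.smul_apply]
  refine Set.mem_biUnion hT' ⟨c⁻¹ • μ, ?_, heq.symm⟩
  change T'.eigenspace _ ≠ ⊥
  rw [← heq]
  exact Submodule.map_bot (σ x) ▸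
    (Submodule.map_injective_of_injective (σ.apply_bijective x).1).ne hμ

theorem le_scalarSubgroup_of_commute (hσ : IsStronglyIrreducible σ)
    (h : ∀ a ∈ N, ∀ b ∈ N, Commute (σ a) (σ b)) : N ≤ scalarSubgroup σ := by
  obtain ⟨χ, hχ⟩ := exists_weightSpace_ne_bot_of_commute (σ := σ.comp N.subtype)
    fun a b => h a a.2 b b.2
  exact hσ.le_scalarSubgroup_of_weightSpace_ne_bot hχ

theorem mul_inv_mem_scalarSubgroup_of_mem_weightSpace (hσ : IsStronglyIrreducible σ)
    {χ : N →* K} {g h : G} (hg : g ∈ N) (hh : h ∈ N)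
    (hgχ : σ g ∈ weightSpace ((σ.linHom σ).comp N.subtype) χ)
    (hhχ : σ h ∈ weightSpace ((σ.linHom σ).comp N.subtype) χ) : g * h⁻¹ ∈ scalarSubgroup σ := by
  let f := σ.toHomUnits.rangeRestrict
  have : (N.map f).Normal := ‹N.Normal›.map f σ.toHomUnits.rangeRestrict_surjective
  -- The centre of `N` modulo the kernel of `σ`, as a preimage to make its normality visible.
  let Z := N ⊓ (Subgroup.centralizer (N.map f : Set _)).comap f
  have hcomm {a b : G} : f a * f b = f b * f a ↔ Commute (σ a) (σ b) := by
    simp [f, Subtype.ext_iff, Units.ext_iff, Commute, SemiconjBy]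
  have hZ {z : G} (hz : z ∈ N) : z ∈ Z ↔ ∀ a ∈ N, Commute (σ a) (σ z) := by
    simp [Z, hz, Subgroup.mem_centralizer_iff, hcomm]
  have : Z ≤ scalarSubgroup σ := hσ.le_scalarSubgroup_of_commute fun a ha b hb =>
    (hZ hb.1).1 hb a ha.1
  refine this ((hZ (mul_mem hg (inv_mem hh))).2 fun a ha => ?_)
  exact commute_apply_mul_inv_of_mem_weightSpace hgχ hhχ ⟨a, ha⟩

theorem le_scalarSubgroup_of_commutator_le (hσ : IsStronglyIrreducible σ)
    (h : ⁅N, N⁆ ≤ scalarSubgroup σ) : N ≤ scalarSubgroup σ := by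
  choose χ hχ using exists_mem_weightSpace_linHom h
  have hfin : (Set.range χ).Finite :=
    (finite_setOf_weightSpace_ne_bot ((σ.linHom σ).comp N.subtype)).subset <| by
      rintro _ ⟨g, rfl⟩
      exact (Submodule.ne_bot_iff _).2 ⟨_, hχ g, ((Group.isUnit (g : G)).map σ).ne_zero⟩
  let rep := Function.invFun χ
  intro g hg
  obtain ⟨μ, hμ⟩ := hσ.exists_eq_smul_one_of_finite_conj (σ g)
    (hfin.image fun ψ => σ (rep ψ)) fun x => by
      let g' : N := ⟨x * g * x⁻¹, ‹N.Normal›.conj_mem g hg x⟩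
      let h' : N := rep (χ g')
      have hh' : σ h' ∈ weightSpace _ (χ g') :=
        (Function.invFun_eq ⟨g', rfl⟩ : χ h' = χ g') ▸ hχ h'
      obtain ⟨c, hc⟩ := mem_scalarSubgroup.1 <|
        hσ.mul_inv_mem_scalarSubgroup_of_mem_weightSpace g'.2 h'.2 (hχ g') hh'
      refine ⟨_, ⟨χ g', ⟨g', rfl⟩, rfl⟩, c, ?_⟩
      calc σ.linHom σ x (σ g) = σ (g' * (h' : G)⁻¹) * σ h' := by
            rw [linHom_apply_self, ← map_mul, inv_mul_cancel_right]
        _ = c • σ h' := by rw [hc, smul_one_mul]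
  exact mem_scalarSubgroup_of_eq_smul hμ

theorem scalarSubgroup_eq_top [hG : Group.IsSolvable G] (hσ : IsStronglyIrreducible σ) :
    scalarSubgroup σ = ⊤ := by
  obtain ⟨d, hd⟩ := hG.solvable
  suffices ∀ i ≤ d, derivedSeries G i ≤ scalarSubgroup σ from top_le_iff.1 (this 0 d.zero_le)
  intro i hi
  induction hi using Nat.decreasingInduction with
  | self => exact hd ▸ bot_le
  | of_succ i _ ih => exact hσ.le_scalarSubgroup_of_commutator_le (derivedSeries_succ G i ▸ ih)

end IsStronglyIrreducible

/-- The **Lie–Kolchin–Malcev theorem**. -/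
theorem exists_finiteIndex_forall_apply_eq_smul {G K V : Type*} [Group G] [Group.IsSolvable G]
    [Field K] [IsAlgClosed K] [AddCommGroup V] [Module K V] [FiniteDimensional K V] [Nontrivial V]
    (σ : Representation K G V) :
    ∃ H : Subgroup G, H.FiniteIndex ∧ ∃ v ≠ 0, ∀ h ∈ H, ∃ c : K, σ h v = c • v := by
  induction hn : Module.finrank K V using Nat.strong_induction_on generalizing G V with
  | _ n ih =>
    subst hn
    by_cases hσ : IsStronglyIrreducible σ
    · obtain ⟨v, hv⟩ := exists_ne (0 : V)
      refine ⟨⊤, inferInstance, v, hv, fun g _ => ?_⟩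
      obtain ⟨c, hc⟩ := mem_scalarSubgroup.1 (hσ.scalarSubgroup_eq_top ▸ Subgroup.mem_top g)
      exact ⟨c, by rw [hc]; rfl⟩
    · simp only [IsStronglyIrreducible, not_forall] at hσ
      obtain ⟨H, _, U, hU, hinv, htop⟩ := hσ
      have := Submodule.nontrivial_iff_ne_bot.2 hU
      let τ := Representation.subrepresentation (σ.comp H.subtype) U fun h => hinv h h.2
      obtain ⟨H', _, u, hu, hH'⟩ := ih _ (Submodule.finrank_lt htop) τ rfl
      refine ⟨H'.map H.subtype, ⟨?_⟩, u, by simpa using hu, ?_⟩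
      · rw [Subgroup.index_map_subtype]
        exact mul_ne_zero Subgroup.FiniteIndex.index_ne_zero Subgroup.FiniteIndex.index_ne_zero
      · rintro _ ⟨h, hh, rfl⟩
        obtain ⟨c, hc⟩ := hH' h hh
        exact ⟨c, congrArg Subtype.val hc⟩

section FinitelyGenerated

variable {G Q : Type*} [Group G] [Group Q]

theorem group_fg_of_ker_of_range (f : G →* Q) (hker : Group.FG f.ker) (hrange : Group.FG f.range) :
    Group.FG G := by
  classical
  rw [Group.fg_iff_subgroup_fg] at hker hrange
  obtain ⟨T, hT⟩ := hrange
  have hsub : (T : Set Q) ⊆ f '' Set.univ := by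
    rw [Set.image_univ, ← MonoidHom.coe_range, ← hT]
    exact Subgroup.subset_closure
  obtain ⟨S, -, rfl⟩ := Finset.subset_set_image_iff.1 hsub
  have hmap : (Subgroup.closure (S : Set G)).map f = f.range := by
    rw [MonoidHom.map_closure, ← hT, Finset.coe_image]
  rw [Group.fg_def, ← codisjoint_iff.1 (Subgroup.map_eq_range_iff.1 hmap)]
  exact Subgroup.FG.sup ⟨S, rfl⟩ hker

theorem group_fg_of_injective_of_range {f : G →* Q} (hf : Function.Injective f)
    (hrange : Group.FG f.range) : Group.FG G :=
  Group.fg_of_surjective (hG := hrange) (f := (MonoidHom.ofInjective hf).symm.toMonoidHom)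
    (MonoidHom.ofInjective hf).symm.surjective

theorem group_fg_of_finiteIndex (H : Subgroup G) [H.FiniteIndex] [hH : Group.FG H] :
    Group.FG G := by
  have htop : Subgroup.closure (Set.range (Quotient.out : G ⧸ H → G)) ⊔ H = ⊤ := by
    refine eq_top_iff.2 fun g _ => ?_
    rw [← mul_inv_cancel_left (Quotient.out (g : G ⧸ H)) g]
    exact Subgroup.mul_mem_sup (Subgroup.subset_closure ⟨_, rfl⟩)
      (QuotientGroup.eq.1 (QuotientGroup.out_eq' _))
  rw [Group.fg_def, ← htop]
  exact Subgroup.FG.sup ((Subgroup.fg_iff _).2 ⟨_, rfl, Set.finite_range (ι := G ⧸ H) _⟩)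
    ((Group.fg_iff_subgroup_fg H).1 hH)

theorem subgroup_group_fg_of_commGroup {A : Type*} [CommGroup A] [Group.FG A] (H : Subgroup A) :
    Group.FG H := by
  rw [Group.fg_iff_subgroup_fg, Subgroup.fg_iff_add_fg]
  have : Module.Finite ℤ (Additive A) := inferInstance
  have h : (AddSubgroup.toIntSubmodule (Subgroup.toAddSubgroup H)).FG := IsNoetherian.noetherian _
  rwa [Submodule.fg_iff_addSubgroup_fg] at h

theorem group_fg_of_injective {A : Type*} [CommGroup A] [Group.FG A] {f : G →* A}
    (hf : Function.Injective f) : Group.FG G :=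
  group_fg_of_injective_of_range hf (subgroup_group_fg_of_commGroup _)

end FinitelyGenerated

section Arithmetic

theorem fg_div {R A : Type*} [CommRing R] [IsNoetherianRing R] [CommRing A] [IsDomain A]
    [Algebra R A] {M N : Submodule R A} (hM : M.FG) (hN : N ≠ ⊥) : (M / N).FG := by
  obtain ⟨y, hy, hy0⟩ := N.exists_mem_ne_zero_of_ne_bot hN
  have : IsNoetherian R M := isNoetherian_of_fg_of_noetherian M hM
  let f : ↥(M / N) →ₗ[R] M :=
    (LinearMap.mulRight R y).restrict fun _ hx => Submodule.mem_div_iff_forall_mul_mem.1 hx y hy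
  refine Module.Finite.iff_fg.1 (Module.Finite.of_injective f fun a b hab => ?_)
  exact Subtype.ext (mul_right_cancel₀ hy0 (congrArg Subtype.val hab))

variable {K : Type*} [Field K] [CharZero K]

theorem group_fg_of_forall_isIntegral (F : IntermediateField ℚ K) [FiniteDimensional ℚ F]
    (U : Subgroup Kˣ) (hF : ∀ u ∈ U, (u : K) ∈ F) (hU : ∀ u ∈ U, IsIntegral ℤ (u : K)) :
    Group.FG U := by
  have : NumberField F := { }
  let f : U →* NumberField.RingOfIntegers F :=
    { toFun u := ⟨⟨((u : Kˣ) : K), hF u u.2⟩,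
        (isIntegral_algebraMap_iff (B := K) (algebraMap F K).injective).1 (hU u u.2)⟩
      map_one' := rfl
      map_mul' _ _ := rfl }
  have : Group.FG (NumberField.RingOfIntegers F)ˣ := Group.fg_iff_monoid_fg.2 inferInstance
  refine group_fg_of_injective (f := f.toHomUnits) fun u v huv => ?_
  have h : f u = f v := congrArg Units.val huv
  exact Subtype.ext (Units.ext (congrArg (fun x : NumberField.RingOfIntegers F => ((x : F) : K)) h))

theorem group_fg_of_forall_mul_mem {M : Submodule ℤ K} (hM : M.FG) (hM0 : M ≠ ⊥)
    (U : Subgroup Kˣ) (hU : ∀ u ∈ U, ∀ x ∈ M, (u : K) * x ∈ M) : Group.FG U := by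
  have hint {x : K} (hx : x ∈ M / M) : IsIntegral ℤ x :=
    isIntegral_of_smul_mem_submodule M hM0 hM x (Submodule.mem_div_iff_forall_mul_mem.1 hx)
  obtain ⟨S, hS⟩ := fg_div hM hM0
  let F := IntermediateField.adjoin ℚ (S : Set K)
  have : FiniteDimensional ℚ F := IntermediateField.finiteDimensional_adjoin fun x hx =>
    (hint (hS ▸ Submodule.subset_span hx)).tower_top
  have hF : M / M ≤ (Subalgebra.toSubmodule F.toSubalgebra).restrictScalars ℤ :=
    hS ▸ Submodule.span_le.2 (IntermediateField.subset_adjoin ℚ _)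
  have hUM (u) (hu : u ∈ U) : (u : K) ∈ M / M := Submodule.mem_div_iff_forall_mul_mem.2 (hU u hu)
  exact group_fg_of_forall_isIntegral F U (fun u hu => hF (hUM u hu)) fun u hu => hint (hUM u hu)

end Arithmetic

section Functionals

variable {G R L K : Type*} [Group G] [CommRing R] [AddCommGroup L] [Module R L] [Field K]
  [Algebra R K]

/-- The representation on the `K`-valued functionals that is dual to a representation on an
`R`-module: `g` acts by precomposition with `ρ g⁻¹`. Functionals are `R`-linear maps into `K`, which
avoids extending scalars to `K`. -/
def functionalRep (K : Type*) [Field K] [Algebra R K] (ρ : Representation R G L) :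
    Representation K G (L →ₗ[R] K) where
  toFun g := LinearMap.lcomp K K (ρ g⁻¹)
  map_one' := by ext; simp
  map_mul' g h := by ext; simp

section

variable {ρ : Representation R G L} {χ : G →* K} {φ : L →ₗ[R] K}

theorem apply_inv_of_mem_weightSpace (h : φ ∈ weightSpace (functionalRep K ρ) χ) (g : G) (x : L) :
    φ (ρ g⁻¹ x) = χ g * φ x :=
  LinearMap.congr_fun (mem_weightSpace.1 h g) x

theorem ker_le_comap_of_mem_weightSpace (h : φ ∈ weightSpace (functionalRep K ρ) χ) (g : G) :
    LinearMap.ker φ ≤ (LinearMap.ker φ).comap (ρ g) := fun x hx => by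
  have := apply_inv_of_mem_weightSpace h g⁻¹ x
  rwa [inv_inv, LinearMap.mem_ker.1 hx, mul_zero] at this

end

instance finiteDimensional_linearMap [Module.Finite R L] : FiniteDimensional K (L →ₗ[R] K) := by
  obtain ⟨n, f, hf⟩ := Module.Finite.exists_fin' R L
  have : FiniteDimensional K ((Fin n → R) →ₗ[R] K) :=
    ((Pi.basisFun R (Fin n)).constr (M' := K) K).finiteDimensional
  exact FiniteDimensional.of_injective (LinearMap.lcomp K K f) fun φ ψ h =>
    LinearMap.ext fun x => (hf x).elim fun y hy => hy ▸ LinearMap.congr_fun h y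

theorem nontrivial_linearMap_of_not_isTorsion [IsDomain R] [IsPrincipalIdealRing R]
    [FaithfulSMul R K] [Module.Finite R L] (hL : ¬ Module.IsTorsion R L) :
    Nontrivial (L →ₗ[R] K) := by
  let T := Submodule.torsion R L
  have : Nontrivial (L ⧸ T) := Submodule.Quotient.nontrivial_iff.2 fun h =>
    hL ((Submodule.isTorsion'_iff_torsion'_eq_top _).2 h)
  obtain ⟨x, hx⟩ := exists_ne (0 : L ⧸ T)
  obtain ⟨f, hf⟩ : ∃ f : Module.Dual R (L ⧸ T), f x ≠ 0 := by
    by_contra! hf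
    exact hx ((Module.forall_dual_apply_eq_zero_iff R x).1 hf)
  obtain ⟨y, rfl⟩ := T.mkQ_surjective x
  refine ⟨Algebra.linearMap R K ∘ₗ f ∘ₗ T.mkQ, 0, fun h => hf ?_⟩
  simpa using LinearMap.congr_fun h y

theorem finrank_ker_lt_of_ne_zero {P : Type*} [IsDomain R] [Module.Finite R L] [AddCommGroup P]
    [Module R P] [Module.IsTorsionFree R P] {φ : L →ₗ[R] P} (hφ : φ ≠ 0) :
    Module.finrank R (LinearMap.ker φ) < Module.finrank R L := by
  have hsum := (LinearMap.ker φ).finrank_quotient_add_finrank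
  rw [φ.quotKerEquivRange.finrank_eq] at hsum
  have : Nontrivial (LinearMap.range φ) :=
    Submodule.nontrivial_iff_ne_bot.2 (by rwa [Ne, LinearMap.range_eq_bot])
  have : 0 < Module.finrank R (LinearMap.range φ) := Module.finrank_pos
  omega

end Functionals

section Lattice

variable {G L : Type*} [Group G] [AddCommGroup L] [Module.Finite ℤ L] {ρ : Representation ℤ G L}

theorem group_fg_of_fixes_functional_of_fixes_ker {K : Type*} [AddCommGroup K]
    (hρ : Function.Injective ρ) (φ : L →ₗ[ℤ] K) (hφ : ∀ g, φ ∘ₗ ρ g = φ)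
    (hker : ∀ g, ∀ x ∈ LinearMap.ker φ, ρ g x = x) : Group.FG G := by
  have hmul (g h : G) : ρ (g * h) - 1 = (ρ g - 1) + (ρ h - 1) := by
    ext x
    have hx := hker g (ρ h x - x) (LinearMap.sub_mem_ker_iff.2 (LinearMap.congr_fun (hφ h) x))
    rw [map_sub, sub_eq_iff_eq_add] at hx
    simp [hx]
    abel
  let f : G →* Multiplicative (Module.End ℤ L) :=
    { toFun g := Multiplicative.ofAdd (ρ g - 1)
      map_one' := by simp
      map_mul' g h := congrArg Multiplicative.ofAdd (hmul g h) }
  have : AddGroup.FG (Module.End ℤ L) :=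
    Module.Finite.iff_addGroup_fg.1 (inferInstanceAs (Module.Finite ℤ (L →ₗ[ℤ] L)))
  refine group_fg_of_injective (f := f) fun g h hgh => hρ ?_
  exact sub_left_injective (Multiplicative.ofAdd.injective hgh)

variable {K : Type*} [Field K] {χ : G →* K} {φ : L →ₗ[ℤ] K}

theorem group_fg_range_of_mem_weightSpace [CharZero K] (hφ : φ ≠ 0)
    (h : φ ∈ weightSpace (functionalRep K ρ) χ) : Group.FG χ.toHomUnits.range := by
  refine group_fg_of_forall_mul_mem (M := LinearMap.range φ) (Module.Finite.iff_fg.1 inferInstance)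
    (mt LinearMap.range_eq_bot.1 hφ) _ ?_
  rintro _ ⟨g, rfl⟩ _ ⟨x, rfl⟩
  exact ⟨ρ g⁻¹ x, apply_inv_of_mem_weightSpace h g x⟩

theorem group_fg_of_mem_weightSpace [CharZero K] (hρ : Function.Injective ρ) (hφ : φ ≠ 0)
    (h : φ ∈ weightSpace (functionalRep K ρ) χ)
    (hker : Group.FG (ρ.subrepresentation (LinearMap.ker φ)
      (ker_le_comap_of_mem_weightSpace h)).toHomUnits.range) : Group.FG G := by
  let τ := ρ.subrepresentation (LinearMap.ker φ) (ker_le_comap_of_mem_weightSpace h)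
  refine group_fg_of_ker_of_range τ.toHomUnits ?_ hker
  let N := τ.toHomUnits.ker
  let χN : N →* K := χ.comp N.subtype
  have hN : φ ∈ weightSpace (functionalRep K (ρ.comp N.subtype)) χN :=
    mem_weightSpace.2 fun g => mem_weightSpace.1 h g
  refine group_fg_of_ker_of_range χN.toHomUnits ?_ (group_fg_range_of_mem_weightSpace hφ hN)
  refine group_fg_of_fixes_functional_of_fixes_ker
    (ρ := (ρ.comp N.subtype).comp χN.toHomUnits.ker.subtype)
    (hρ.comp (Subtype.val_injective.comp Subtype.val_injective)) φ (fun g => ?_) fun g x hx => ?_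
  · ext x
    have hg : χN (g⁻¹ : χN.toHomUnits.ker) = 1 := congrArg Units.val (g⁻¹).2
    have hx := apply_inv_of_mem_weightSpace hN (g⁻¹ : χN.toHomUnits.ker) x
    rw [hg, one_mul] at hx
    simpa using hx
  · exact congrArg Subtype.val (LinearMap.congr_fun (congrArg Units.val g.1.2) ⟨x, hx⟩)

end Lattice

theorem group_fg_of_isSolvable_units_end {L : Type*} [AddCommGroup L] [Module.Finite ℤ L]
    (U : Subgroup (Module.End ℤ L)ˣ) [Group.IsSolvable U] : Group.FG U := by
  induction hd : Module.finrank ℤ L using Nat.strong_induction_on generalizing L with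
  | _ d ih =>
    subst hd
    by_cases htors : Module.IsTorsion ℤ L
    · have : Finite L := Module.finite_of_fg_torsion L htors
      have : Finite (Module.End ℤ L) := DFunLike.finite _
      exact Group.fg_of_finite
    · let ρ : Representation ℤ U L := (Units.coeHom _).comp U.subtype
      have := nontrivial_linearMap_of_not_isTorsion (K := AlgebraicClosure ℚ) htors
      obtain ⟨H, _, φ, hφ, hH⟩ :=
        exists_finiteIndex_forall_apply_eq_smul (functionalRep (AlgebraicClosure ℚ) ρ)
      let ρH : Representation ℤ H L := ρ.comp H.subtype
      obtain ⟨χ, hχ⟩ := exists_mem_weightSpace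
        (σ := functionalRep (AlgebraicClosure ℚ) ρH) hφ fun h => hH h h.2
      have : Group.FG H := group_fg_of_mem_weightSpace
        (Units.val_injective.comp (Subtype.val_injective.comp Subtype.val_injective)) hφ hχ <| by
          have := Group.isSolvable_of_surjective (ρH.subrepresentation (LinearMap.ker φ)
            (ker_le_comap_of_mem_weightSpace hχ)).toHomUnits.rangeRestrict_surjective
          exact ih _ (finrank_ker_lt_of_ne_zero hφ) _ rfl
      exact group_fg_of_finiteIndex H

theorem group_fg_of_isSolvable_of_injective {G L : Type*} [Group G] [Group.IsSolvable G]
    [AddCommGroup L] [Module.Finite ℤ L] {ρ : Representation ℤ G L} (hρ : Function.Injective ρ) :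
    Group.FG G := by
  have := Group.isSolvable_of_surjective ρ.toHomUnits.rangeRestrict_surjective
  refine group_fg_of_injective_of_range (f := ρ.toHomUnits) ?_ (group_fg_of_isSolvable_units_end _)
  exact fun g h hgh => hρ (congrArg Units.val hgh)

section Polycyclic

variable {G : Type*} [Group G]

/-- One step of a subnormal series with cyclic factors: `H` is normal in `K` and `K / H` is
cyclic. -/
def IsCyclicStep (H K : Subgroup G) : Prop :=
  H ≤ K ∧ (∀ g ∈ K, ∀ x ∈ H, g * x * g⁻¹ ∈ H) ∧ ∃ y : G, H ⊔ Subgroup.zpowers y = K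

/-- A polycyclic subgroup is one that a subnormal series with cyclic factors joins to the trivial
subgroup. -/
def IsPolycyclic (H : Subgroup G) : Prop :=
  ∃ s : RelSeries {p : Subgroup G × Subgroup G | IsCyclicStep p.1 p.2}, s.head = ⊥ ∧ s.last = H

theorem isPolycyclic_bot : IsPolycyclic (⊥ : Subgroup G) :=
  ⟨RelSeries.singleton _ ⊥, rfl, rfl⟩

theorem IsPolycyclic.of_isCyclicStep {H K : Subgroup G} (hH : IsPolycyclic H)
    (h : IsCyclicStep H K) : IsPolycyclic K := by
  obtain ⟨s, hbot, rfl⟩ := hH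
  exact ⟨s.snoc K h, by rwa [RelSeries.head_snoc], RelSeries.last_snoc _ _ _⟩

theorem isCyclicStep_sup_zpowers {D H : Subgroup G} {a : G} (hH : H ≤ D) (ha : a ∈ D)
    (hD : ⁅D, D⁆ ≤ H) : IsCyclicStep H (H ⊔ Subgroup.zpowers a) := by
  refine ⟨le_sup_left, fun g hg x hx => ?_, a, rfl⟩
  have hgD : g ∈ D := sup_le hH (Subgroup.zpowers_le.2 ha) hg
  simpa [commutatorElement_def] using
    mul_mem (hD (Subgroup.commutator_mem_commutator hgD (hH hx))) hx

theorem IsPolycyclic.of_commutator_le {N D : Subgroup G} (hN : IsPolycyclic N) (hND : N ≤ D)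
    (hD : D.FG) (hcomm : ⁅D, D⁆ ≤ N) : IsPolycyclic D := by
  classical
  obtain ⟨s, rfl⟩ := hD
  suffices ∀ t ⊆ s, IsPolycyclic (N ⊔ Subgroup.closure (t : Set G)) by
    simpa [sup_eq_right.2 hND] using this s subset_rfl
  intro t
  induction t using Finset.induction_on with
  | empty => simpa using hN
  | insert a t _ ih =>
    intro hs
    obtain ⟨ha, ht⟩ := Finset.insert_subset_iff.1 hs
    rw [Finset.coe_insert, Set.insert_eq, Subgroup.closure_union, ← Subgroup.zpowers_eq_closure,
      sup_comm (Subgroup.zpowers a), ← sup_assoc]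
    exact (ih ht).of_isCyclicStep <| isCyclicStep_sup_zpowers
      (sup_le hND (Subgroup.closure_mono ht)) (Subgroup.subset_closure ha)
      (hcomm.trans le_sup_left)

theorem isPolycyclic_top_of_forall_fg [hG : Group.IsSolvable G] (hfg : ∀ H : Subgroup G, H.FG) :
    IsPolycyclic (⊤ : Subgroup G) := by
  obtain ⟨d, hd⟩ := hG.solvable
  suffices ∀ i ≤ d, IsPolycyclic (derivedSeries G i) from this 0 d.zero_le
  intro i hi
  induction hi using Nat.decreasingInduction with
  | self => exact hd ▸ isPolycyclic_bot
  | of_succ i _ ih =>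
    exact ih.of_commutator_le (derivedSeries_antitone G i.le_succ) (hfg _)
      (derivedSeries_succ G i).ge

end Polycyclic

theorem stmt_10_general {G L : Type*} [Group G] [Group.IsSolvable G] [AddCommGroup L]
    [Module.Finite ℤ L] {ρ : Representation ℤ G L} (hρ : Function.Injective ρ) :
    ∃ (m : ℕ) (S : Fin (m + 1) → Subgroup G),
      S 0 = ⊥ ∧ S (Fin.last m) = ⊤ ∧
      ∀ i : Fin m,
        S i.castSucc ≤ S i.succ ∧
        (∀ g ∈ S i.succ, ∀ x ∈ S i.castSucc, g * x * g⁻¹ ∈ S i.castSucc) ∧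
        ∃ y : G, S i.castSucc ⊔ Subgroup.zpowers y = S i.succ := by
  obtain ⟨s, hbot, htop⟩ := isPolycyclic_top_of_forall_fg (G := G) fun H =>
    (Group.fg_iff_subgroup_fg H).1 <| group_fg_of_isSolvable_of_injective
      (ρ := ρ.comp H.subtype) (hρ.comp Subtype.val_injective)
  exact ⟨s.length, s, hbot, htop, s.step⟩

/-- Every solvable subgroup of `GL(n,ℤ)` is polycyclic: it admits a subnormal series
with cyclic factors (each term is normal in the next, and each successive quotient is
generated by the previous term together with a single element). -/
theorem stmt_10 (n : ℕ) (G : Subgroup (Matrix (Fin n) (Fin n) ℤ)ˣ)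
    (hG : IsSolvable G) :
    ∃ (m : ℕ) (S : Fin (m + 1) → Subgroup ↥G),
      S 0 = ⊥ ∧ S (Fin.last m) = ⊤ ∧
      ∀ i : Fin m,
        S i.castSucc ≤ S i.succ ∧
        (∀ g ∈ S i.succ, ∀ x ∈ S i.castSucc, g * x * g⁻¹ ∈ S i.castSucc) ∧
        ∃ y : ↥G, S i.castSucc ⊔ Subgroup.zpowers y = S i.succ := by
  have : Group.IsSolvable G := hG
  let e : Matrix (Fin n) (Fin n) ℤ ≃ₐ[ℤ] Module.End ℤ (Fin n → ℤ) := Matrix.toLinAlgEquiv'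
  exact stmt_10_general
    (ρ := (e : Matrix (Fin n) (Fin n) ℤ →* Module.End ℤ (Fin n → ℤ)).comp
      ((Units.coeHom _).comp G.subtype))
    (e.injective.comp (Units.val_injective.comp Subtype.val_injective))
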